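/- (Redundancy of all other Fourier–Motzkin combinations.) Let J⁺_1, …, J⁺_{n⁺} and J⁻_1, …, J⁻_{n⁻} be two lists of nonempty subsets of 𝒦 having the same presence vector, and let J⊕_1, …, J⊕_{c_max} be their common compact form of the element rearrangement without empty sets, where c_max is the largest entry of the common presence vector. Then, with b⁺(T) = I(V_T; Y | V_{T^c}, Q) and b⁻(T) = I(V_T; Z | Q), one has ∑_{i=1}^{n⁺} b⁺(J⁺_i) − ∑_{i=1}^{n⁻} b⁻(J⁻_i) ≥ ∑_{i=1}^{c_max} [ b⁺(J⊕_i) − b⁻(J⊕_i) ]. -/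

import Mathlib

open scoped Classical

/-- Probability that the random variable `X` (on the finite sample space `Ω` with
probability mass function `p`) takes the value `a`. -/
noncomputable def prob {Ω : Type} [Fintype Ω] (p : Ω → ℝ) {α : Type} (X : Ω → α)
    (a : α) : ℝ :=
  ∑ ω : Ω, if X ω = a then p ω else 0

/-- Shannon entropy (base 2) of the random variable `X`, with the convention
`0 · log 0 = 0`. -/
noncomputable def ent {Ω : Type} [Fintype Ω] (p : Ω → ℝ) {α : Type} [Fintype α]
    (X : Ω → α) : ℝ :=
  -∑ a : α, prob p X a * Real.logb 2 (prob p X a)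

/-- Conditional mutual information `I(X; Y | Z) = H(X,Z) + H(Y,Z) - H(X,Y,Z) - H(Z)`. -/
noncomputable def condMI {Ω : Type} [Fintype Ω] (p : Ω → ℝ) {α β γ : Type}
    [Fintype α] [Fintype β] [Fintype γ] (X : Ω → α) (Y : Ω → β) (Z : Ω → γ) : ℝ :=
  ent p (fun ω => (X ω, Z ω)) + ent p (fun ω => (Y ω, Z ω))
    - ent p (fun ω => (X ω, Y ω, Z ω)) - ent p Z

/-- The tuple-valued random variable `V_J = (V_j)_{j ∈ J}`. -/
def VJ {Ω : Type} {K : ℕ} {α : Fin K → Type} (V : (i : Fin K) → Ω → α i)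
    (J : Finset (Fin K)) : Ω → ((j : J) → α j) :=
  fun ω j => V j ω

/-- `V_1, …, V_K` are mutually conditionally independent given `Q`:
`P(V_1 = v_1, …, V_K = v_K, Q = q) · P(Q = q)^(K-1) = ∏ i, P(V_i = v_i, Q = q)`. -/
def CondIndep {Ω : Type} [Fintype Ω] {𝒬 : Type} {K : ℕ} {α : Fin K → Type}
    (p : Ω → ℝ) (Q : Ω → 𝒬) (V : (i : Fin K) → Ω → α i) : Prop :=
  ∀ (q : 𝒬) (v : (i : Fin K) → α i),
    prob p (fun ω => ((fun i => V i ω : (i : Fin K) → α i), Q ω)) (v, q)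
        * (prob p Q q) ^ (K - 1)
      = ∏ i : Fin K, prob p (fun ω => (V i ω, Q ω)) (v i, q)

/-- The `i`-th set of the compact form of the element rearrangement of the list
`T 0, …, T (t-1)` of subsets of `Fin K`. -/
def compactForm {K t : ℕ} (T : Fin t → Finset (Fin K)) (i : ℕ) : Finset (Fin K) :=
  (Finset.powersetCard i (Finset.univ : Finset (Fin t))).sup fun S => S.inf T

/-- The largest entry of the presence vector of the list `T`. -/
def tMax {K t : ℕ} (T : Fin t → Finset (Fin K)) : ℕ :=
  Finset.univ.sup fun k : Fin K => (Finset.univ.filter fun j : Fin t => k ∈ T j).card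

/-- The law of a random variable integrates functions of that variable. -/
lemma sum_prob_mul {Ω : Type} [Fintype Ω] (p : Ω → ℝ) {α : Type} [Fintype α]
    (X : Ω → α) (F : α → ℝ) : ∑ a, prob p X a * F a = ∑ ω, p ω * F (X ω) := by
  simp only [prob, Finset.sum_mul, ite_mul, zero_mul]
  rw [Finset.sum_comm]
  simp

lemma prob_nonneg {Ω : Type} [Fintype Ω] {p : Ω → ℝ} (hp : ∀ ω, 0 ≤ p ω) {α : Type}
    (X : Ω → α) (a : α) : 0 ≤ prob p X a :=
  Finset.sum_nonneg fun ω _ => by split_ifs <;> simp [hp]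

lemma prob_apply_pos {Ω : Type} [Fintype Ω] {p : Ω → ℝ} (hp : ∀ ω, 0 ≤ p ω) {α : Type}
    (X : Ω → α) {ω : Ω} (hω : 0 < p ω) : 0 < prob p X (X ω) := by
  refine Finset.sum_pos' (fun ω' _ => ?_) ⟨ω, Finset.mem_univ _, by simpa using hω⟩
  split_ifs <;> simp [hp]

lemma sum_prob_prod {Ω : Type} [Fintype Ω] (p : Ω → ℝ) {α β : Type} [Fintype α]
    (X : Ω → α) (Y : Ω → β) (b : β) :
    ∑ a, prob p (fun ω => (X ω, Y ω)) (a, b) = prob p Y b := by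
  simp only [prob, Prod.mk.injEq, ite_and]
  rw [Finset.sum_comm]
  simp

/-- Entropy as an expected value over the sample space. -/
lemma ent_eq_sum {Ω : Type} [Fintype Ω] (p : Ω → ℝ) {α : Type} [Fintype α] (X : Ω → α) :
    ent p X = -∑ ω, p ω * Real.logb 2 (prob p X (X ω)) := by
  rw [ent, sum_prob_mul p X fun a => Real.logb 2 (prob p X a)]

/-- Entropy depends only on the partition of the sample space induced by the variable. -/
lemma ent_congr {Ω : Type} [Fintype Ω] (p : Ω → ℝ) {α β : Type} [Fintype α] [Fintype β]
    {X : Ω → α} {Y : Ω → β} (h : ∀ ω ω', X ω = X ω' ↔ Y ω = Y ω') : ent p X = ent p Y := by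
  simp only [ent_eq_sum, prob, h]

/-- Conditional mutual information is nonnegative. -/
lemma condMI_nonneg {Ω : Type} [Fintype Ω] {p : Ω → ℝ} (hp : ∀ ω, 0 ≤ p ω)
    {α β γ : Type} [Fintype α] [Fintype β] [Fintype γ]
    (X : Ω → α) (Y : Ω → β) (Z : Ω → γ) : 0 ≤ condMI p X Y Z := by
  set A := prob p fun ω => (X ω, Z ω) with hA
  set B := prob p fun ω => (Y ω, Z ω) with hB
  set D := prob p fun ω => (X ω, Y ω, Z ω) with hD
  set C := prob p Z with hC
  let r : α × β × γ → ℝ := fun x => A (x.1, x.2.2) * B x.2 / (D x * C x.2.2)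
  have hpoint : ∀ ω, p ω * (Real.logb 2 (A (X ω, Z ω)) + Real.logb 2 (B (Y ω, Z ω))
      - Real.logb 2 (D (X ω, Y ω, Z ω)) - Real.logb 2 (C (Z ω)))
      ≤ (p ω * r (X ω, Y ω, Z ω) - p ω) / Real.log 2 := by
    intro ω
    rcases (hp ω).eq_or_lt with h | h
    · simp [← h]
    have a := prob_apply_pos hp (fun ω => (X ω, Z ω)) h
    have b := prob_apply_pos hp (fun ω => (Y ω, Z ω)) h
    have d := prob_apply_pos hp (fun ω => (X ω, Y ω, Z ω)) h
    have c := prob_apply_pos hp Z h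
    rw [← hA] at a
    rw [← hB] at b
    rw [← hD] at d
    rw [← hC] at c
    have hlog := Real.log_le_sub_one_of_pos (div_pos (mul_pos a b) (mul_pos d c))
    rw [Real.log_div (mul_pos a b).ne' (mul_pos d c).ne', Real.log_mul a.ne' b.ne',
      Real.log_mul d.ne' c.ne'] at hlog
    have h2 : 0 < Real.log 2 := Real.log_pos (by norm_num)
    rw [le_div_iff₀ h2]
    simp only [Real.logb]
    field_simp
    simp only [r]
    linarith
  have hr : ∑ ω, p ω * r (X ω, Y ω, Z ω) ≤ ∑ ω, p ω := by
    rw [← sum_prob_mul p (fun ω => (X ω, Y ω, Z ω)) r]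
    calc ∑ x, D x * r x ≤ ∑ x : α × β × γ, A (x.1, x.2.2) * B x.2 / C x.2.2 := by
          refine Finset.sum_le_sum fun x _ => ?_
          have hnn : 0 ≤ A (x.1, x.2.2) * B x.2 / C x.2.2 :=
            div_nonneg (mul_nonneg (prob_nonneg hp _ _) (prob_nonneg hp _ _))
              (prob_nonneg hp _ _)
          by_cases hd : D x = 0
          · simpa [hd] using hnn
          · refine le_of_eq ?_
            simp only [r]
            rw [← mul_div_assoc, mul_div_mul_left _ _ hd]
      _ = ∑ c, (∑ a, A (a, c)) * (∑ b, B (b, c)) / C c := by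
          simp only [Fintype.sum_prod_type, Finset.sum_mul_sum, Finset.sum_div]
          rw [Finset.sum_comm' (t' := Finset.univ) (s' := fun _ => Finset.univ) (by simp)]
          rw [Finset.sum_congr rfl fun b _ => Finset.sum_comm, Finset.sum_comm]
          exact Finset.sum_congr rfl fun c _ => Finset.sum_comm
      _ = ∑ c, C c * 1 := by
          refine Finset.sum_congr rfl fun c _ => ?_
          rw [hA, hB, sum_prob_prod, sum_prob_prod, ← hC, mul_one, mul_self_div_self]
      _ = ∑ ω, p ω := by
          rw [hC, sum_prob_mul p Z fun _ => 1]
          simp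
  have hsum := Finset.sum_le_sum fun ω (_ : ω ∈ Finset.univ) => hpoint ω
  rw [← Finset.sum_div, Finset.sum_sub_distrib] at hsum
  have hle := hsum.trans (div_nonpos_of_nonpos_of_nonneg (sub_nonpos.2 hr)
    (Real.log_nonneg (by norm_num)))
  simp only [mul_add, mul_sub, Finset.sum_add_distrib, Finset.sum_sub_distrib] at hle
  simp only [condMI, ent_eq_sum]
  linarith

lemma VJ_eq_iff {Ω : Type} {K : ℕ} {α : Fin K → Type} (V : (i : Fin K) → Ω → α i)
    (S : Finset (Fin K)) (ω ω' : Ω) : VJ V S ω = VJ V S ω' ↔ ∀ j ∈ S, V j ω = V j ω' := by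
  simp [VJ, funext_iff]

/-- Submodularity of `S ↦ H(V_S, W)`. -/
lemma ent_VJ_submodular {Ω : Type} [Fintype Ω] {p : Ω → ℝ} (hp : ∀ ω, 0 ≤ p ω) {K : ℕ}
    {α : Fin K → Type} [∀ i, Fintype (α i)] (V : (i : Fin K) → Ω → α i) {β : Type} [Fintype β]
    (W : Ω → β) (S T : Finset (Fin K)) :
    ent p (fun ω => (VJ V (S ∪ T) ω, W ω)) + ent p (fun ω => (VJ V (S ∩ T) ω, W ω))
      ≤ ent p (fun ω => (VJ V S ω, W ω)) + ent p (fun ω => (VJ V T ω, W ω)) := by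
  have h := condMI_nonneg hp (VJ V S) (VJ V T) fun ω => (VJ V (S ∩ T) ω, W ω)
  have hS : ent p (fun ω => (VJ V S ω, VJ V (S ∩ T) ω, W ω)) = ent p (fun ω => (VJ V S ω, W ω)) :=
    ent_congr p fun ω ω' => by
      simp only [Prod.mk.injEq, VJ_eq_iff, Finset.mem_inter]
      grind
  have hT : ent p (fun ω => (VJ V T ω, VJ V (S ∩ T) ω, W ω)) = ent p (fun ω => (VJ V T ω, W ω)) :=
    ent_congr p fun ω ω' => by
      simp only [Prod.mk.injEq, VJ_eq_iff, Finset.mem_inter]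
      grind
  have hST : ent p (fun ω => (VJ V S ω, VJ V T ω, VJ V (S ∩ T) ω, W ω))
      = ent p (fun ω => (VJ V (S ∪ T) ω, W ω)) :=
    ent_congr p fun ω ω' => by
      simp only [Prod.mk.injEq, VJ_eq_iff, Finset.mem_inter, Finset.mem_union]
      grind
  rw [condMI, hS, hT, hST] at h
  linarith

lemma ent_VJ_empty {Ω : Type} [Fintype Ω] (p : Ω → ℝ) {K : ℕ} {α : Fin K → Type}
    [∀ i, Fintype (α i)] (V : (i : Fin K) → Ω → α i) {β : Type} [Fintype β] (W : Ω → β) :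
    ent p (fun ω => (VJ V ∅ ω, W ω)) = ent p W :=
  ent_congr p fun ω ω' => by simp [VJ_eq_iff]

/-- The chain rule for the full tuple of conditionally independent variables. -/
lemma CondIndep.ent_VJ_univ {Ω : Type} [Fintype Ω] {p : Ω → ℝ} (hp : ∀ ω, 0 ≤ p ω) {K : ℕ}
    {α : Fin K → Type} [∀ i, Fintype (α i)] {𝒬 : Type} [Fintype 𝒬] {Q : Ω → 𝒬}
    {V : (i : Fin K) → Ω → α i} (hind : CondIndep p Q V) :
    ent p (fun ω => (VJ V Finset.univ ω, Q ω))
      = ent p Q + ∑ i, (ent p (fun ω => (V i ω, Q ω)) - ent p Q) := by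
  obtain rfl | hK := Nat.eq_zero_or_pos K
  · rw [Finset.univ_eq_empty, ent_VJ_empty, Finset.sum_empty, add_zero]
  have hfull : ent p (fun ω => (VJ V Finset.univ ω, Q ω))
      = ent p (fun ω => ((fun i => V i ω : (i : Fin K) → α i), Q ω)) :=
    ent_congr p fun ω ω' => by
      rw [Prod.mk.injEq, Prod.mk.injEq, VJ_eq_iff, funext_iff]
      simp
  have hpoint : ∀ ω, p ω * Real.logb 2 (prob p
        (fun ω => ((fun i => V i ω : (i : Fin K) → α i), Q ω)) (fun i => V i ω, Q ω))
        + ((K : ℝ) - 1) * (p ω * Real.logb 2 (prob p Q (Q ω)))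
      = ∑ i, p ω * Real.logb 2 (prob p (fun ω => (V i ω, Q ω)) (V i ω, Q ω)) := by
    intro ω
    rcases (hp ω).eq_or_lt with h | h
    · simp [← h]
    have hlog := congrArg (Real.logb 2) (hind (Q ω) fun i => V i ω)
    rw [Real.logb_mul (prob_apply_pos hp
        (fun ω => ((fun i => V i ω : (i : Fin K) → α i), Q ω)) h).ne'
        (pow_pos (prob_apply_pos hp Q h) _).ne', Real.logb_pow,
      Real.logb_prod _ _ fun i _ => (prob_apply_pos hp (fun ω => (V i ω, Q ω)) h).ne',
      Nat.cast_sub hK, Nat.cast_one] at hlog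
    rw [← Finset.mul_sum, ← hlog]
    ring
  have hsum := Finset.sum_congr (rfl : (Finset.univ : Finset Ω) = _) fun ω _ => hpoint ω
  rw [Finset.sum_add_distrib, ← Finset.mul_sum, Finset.sum_comm] at hsum
  rw [hfull, Finset.sum_sub_distrib]
  simp only [ent_eq_sum, Finset.sum_neg_distrib, Finset.sum_const, Finset.card_univ,
    Fintype.card_fin, nsmul_eq_mul]
  linarith

/-- The chain rule for every subtuple of conditionally independent variables. -/
lemma CondIndep.ent_VJ {Ω : Type} [Fintype Ω] {p : Ω → ℝ} (hp : ∀ ω, 0 ≤ p ω) {K : ℕ}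
    {α : Fin K → Type} [∀ i, Fintype (α i)] {𝒬 : Type} [Fintype 𝒬] {Q : Ω → 𝒬}
    {V : (i : Fin K) → Ω → α i} (hind : CondIndep p Q V) (S : Finset (Fin K)) :
    ent p (fun ω => (VJ V S ω, Q ω))
      = ent p Q + ∑ i ∈ S, (ent p (fun ω => (V i ω, Q ω)) - ent p Q) := by
  have hle : ∀ S : Finset (Fin K), ent p (fun ω => (VJ V S ω, Q ω))
      ≤ ent p Q + ∑ i ∈ S, (ent p (fun ω => (V i ω, Q ω)) - ent p Q) := by
    intro S
    induction S using Finset.induction_on with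
    | empty => simp [ent_VJ_empty]
    | insert i S hi ih =>
      have hsub := ent_VJ_submodular hp V Q {i} S
      have hsingle : ent p (fun ω => (VJ V {i} ω, Q ω)) = ent p (fun ω => (V i ω, Q ω)) :=
        ent_congr p fun ω ω' => by simp [VJ_eq_iff]
      rw [Finset.singleton_inter_of_notMem hi, ent_VJ_empty, hsingle,
        ← Finset.insert_eq] at hsub
      rw [Finset.sum_insert hi]
      linarith
  have hsub := ent_VJ_submodular hp V Q S Sᶜ
  rw [Finset.union_compl, Finset.inter_compl, ent_VJ_empty, hind.ent_VJ_univ hp,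
    ← Finset.sum_add_sum_compl S] at hsub
  linarith [hle S, hle Sᶜ]

/-- Modularity of `S ↦ H(V_S, Q)` for conditionally independent variables. -/
lemma CondIndep.ent_VJ_modular {Ω : Type} [Fintype Ω] {p : Ω → ℝ} (hp : ∀ ω, 0 ≤ p ω) {K : ℕ}
    {α : Fin K → Type} [∀ i, Fintype (α i)] {𝒬 : Type} [Fintype 𝒬] {Q : Ω → 𝒬}
    {V : (i : Fin K) → Ω → α i} (hind : CondIndep p Q V) (S T : Finset (Fin K)) :
    ent p (fun ω => (VJ V (S ∪ T) ω, Q ω)) + ent p (fun ω => (VJ V (S ∩ T) ω, Q ω))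
      = ent p (fun ω => (VJ V S ω, Q ω)) + ent p (fun ω => (VJ V T ω, Q ω)) := by
  simp only [hind.ent_VJ hp]
  linarith [Finset.sum_union_inter (s₁ := S) (s₂ := T)
    (f := fun i => ent p (fun ω => (V i ω, Q ω)) - ent p Q)]

/-- `I(V_T; Y | V_{Tᶜ}, Q)` as a combination of entropies of tuples. -/
lemma condMI_VJ_compl {Ω : Type} [Fintype Ω] (p : Ω → ℝ) {K : ℕ} {α : Fin K → Type}
    [∀ i, Fintype (α i)] {𝒬 𝒴 : Type} [Fintype 𝒬] [Fintype 𝒴] (Q : Ω → 𝒬) (Y : Ω → 𝒴)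
    (V : (i : Fin K) → Ω → α i) (T : Finset (Fin K)) :
    condMI p (VJ V T) Y (fun ω => (VJ V Tᶜ ω, Q ω))
      = ent p (fun ω => (VJ V Finset.univ ω, Q ω)) + ent p (fun ω => (VJ V Tᶜ ω, Y ω, Q ω))
        - ent p (fun ω => (VJ V Finset.univ ω, Y ω, Q ω)) - ent p (fun ω => (VJ V Tᶜ ω, Q ω)) := by
  rw [condMI]
  congr 1
  congr 1
  · congr 1
    · refine ent_congr p fun ω ω' => ?_
      simp only [Prod.mk.injEq, VJ_eq_iff, Finset.mem_compl, Finset.mem_univ]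
      grind
    · refine ent_congr p fun ω ω' => ?_
      simp only [Prod.mk.injEq]
      tauto
  · refine ent_congr p fun ω ω' => ?_
    simp only [Prod.mk.injEq, VJ_eq_iff, Finset.mem_compl, Finset.mem_univ]
    grind

/-- `I(V_T; Z | Q)` as a combination of entropies of tuples. -/
lemma condMI_VJ {Ω : Type} [Fintype Ω] (p : Ω → ℝ) {K : ℕ} {α : Fin K → Type}
    [∀ i, Fintype (α i)] {𝒬 𝒵 : Type} [Fintype 𝒬] [Fintype 𝒵] (Q : Ω → 𝒬) (Z : Ω → 𝒵)
    (V : (i : Fin K) → Ω → α i) (T : Finset (Fin K)) :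
    condMI p (VJ V T) Z Q
      = ent p (fun ω => (VJ V T ω, Q ω)) + ent p (fun ω => (Z ω, Q ω))
        - ent p (fun ω => (VJ V T ω, Z ω, Q ω)) - ent p Q :=
  rfl

/-- The compact form consists of the superlevel sets of the presence vector. -/
lemma compactForm_eq_filter {K t : ℕ} (T : Fin t → Finset (Fin K)) (i : ℕ) :
    compactForm T i
      = Finset.univ.filter fun k => i ≤ (Finset.univ.filter fun j => k ∈ T j).card := by
  ext k
  simp only [compactForm, Finset.mem_sup, Finset.mem_powersetCard, Finset.subset_univ, true_and,
    Finset.mem_inf, Finset.mem_filter, Finset.mem_univ]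
  constructor
  · rintro ⟨S, rfl, hS⟩
    exact Finset.card_le_card fun j hj => by simpa using hS j hj
  · intro h
    obtain ⟨S, hS, rfl⟩ := Finset.exists_subset_card_eq h
    exact ⟨S, rfl, fun j hj => by simpa using hS hj⟩

/-- A submodular function vanishing at `∅` does not increase in total when a family of sets is
replaced by the superlevel sets of its presence vector. -/
lemma sum_superlevel_le_of_submodular {κ ι : Type*} [Fintype κ] [DecidableEq κ]
    {g : Finset κ → ℝ} (h0 : g ∅ = 0) (hg : ∀ S T, g (S ∪ T) + g (S ∩ T) ≤ g S + g T)
    (T : ι → Finset κ) (N : ℕ) (s : Finset ι) (hN : ∀ k, (s.filter fun j => k ∈ T j).card ≤ N) :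
    ∑ i ∈ Finset.Icc 1 N,
        g (Finset.univ.filter fun k => i ≤ (s.filter fun j => k ∈ T j).card)
      ≤ ∑ j ∈ s, g (T j) := by
  simp only [show Finset.Icc 1 N = Finset.Ico (0 + 1) (N + 1) from rfl,
    ← Finset.sum_Ico_add' _ 0 N 1, ← Finset.range_eq_Ico]
  induction s using Finset.induction_on with
  | empty => simp [h0]
  | insert a s ha ih =>
    let C : ℕ → Finset κ := fun i =>
      Finset.univ.filter fun k => i ≤ (s.filter fun j => k ∈ T j).card
    have hcard : ∀ k, ((insert a s).filter fun j => k ∈ T j).card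
        = (s.filter fun j => k ∈ T j).card + if k ∈ T a then 1 else 0 := by
      intro k
      rw [Finset.filter_insert]
      split_ifs
      · rw [Finset.card_insert_of_notMem (by simp [ha])]
      · simp
    have ih := ih fun k => (by have := hN k; rw [hcard] at this; omega)
    have hstep : ∀ i, g (Finset.univ.filter fun k =>
          i + 1 ≤ ((insert a s).filter fun j => k ∈ T j).card)
        + g (C (i + 1) ∩ T a) ≤ g (C i ∩ T a) + g (C (i + 1)) := by
      intro i
      convert hg (C i ∩ T a) (C (i + 1)) using 3
      · ext k
        simp only [C, hcard, Finset.mem_filter, Finset.mem_union, Finset.mem_inter,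
          Finset.mem_univ, true_and]
        split_ifs with hk <;> simp only [hk, and_true, and_false, false_or] <;> omega
      · ext k
        simp only [C, Finset.mem_filter, Finset.mem_inter, Finset.mem_univ, true_and]
        constructor
        · rintro ⟨h, hk⟩
          exact ⟨⟨by omega, hk⟩, h⟩
        · rintro ⟨⟨-, hk⟩, h⟩
          exact ⟨h, hk⟩
    have hfirst : C 0 ∩ T a = T a := by simp [C]
    have hlast : C N ∩ T a = ∅ := by
      ext k
      have := hN k
      rw [hcard] at this
      simp only [C, Finset.mem_filter, Finset.mem_inter, Finset.mem_univ, true_and,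
        Finset.notMem_empty, iff_false, not_and]
      intro h hk
      simp only [hk, if_true] at this
      omega
    have hsum := Finset.sum_le_sum fun i (_ : i ∈ Finset.range N) => hstep i
    have htel := Finset.sum_range_sub (fun i => g (C i ∩ T a)) N
    rw [hfirst, hlast, h0] at htel
    simp only [Finset.sum_add_distrib, Finset.sum_sub_distrib] at hsum htel
    rw [Finset.sum_insert ha]
    linarith

/-- Redundancy of all other Fourier–Motzkin combinations: if the two lists
`J⁺_1, …, J⁺_{n⁺}` and `J⁻_1, …, J⁻_{n⁻}` of nonempty subsets of `𝒦` have the same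
presence vector, and `J⊕_1, …, J⊕_{c_max}` is their common compact form without empty
sets, then with `b⁺(T) = I(V_T; Y | V_{T^c}, Q)` and `b⁻(T) = I(V_T; Z | Q)`,
`∑ᵢ b⁺(J⁺_i) − ∑ᵢ b⁻(J⁻_i) ≥ ∑ᵢ [b⁺(J⊕_i) − b⁻(J⊕_i)]`. -/
theorem fm_combination_redundant {Ω 𝒬 𝒴 𝒵 : Type} [Fintype Ω] [Fintype 𝒬] [Fintype 𝒴]
    [Fintype 𝒵] {K : ℕ} {α : Fin K → Type} [∀ i, Fintype (α i)]
    (p : Ω → ℝ) (hp : ∀ ω, 0 ≤ p ω) (hp1 : ∑ ω : Ω, p ω = 1)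
    (Q : Ω → 𝒬) (Y : Ω → 𝒴) (Z : Ω → 𝒵) (V : (i : Fin K) → Ω → α i)
    (hind : CondIndep p Q V) {np nm : ℕ}
    (Jp : Fin np → Finset (Fin K)) (Jm : Fin nm → Finset (Fin K))
    (hJp : ∀ i, Jp i ≠ ∅) (hJm : ∀ i, Jm i ≠ ∅)
    (hpres : ∀ k : Fin K,
      (Finset.univ.filter fun j : Fin np => k ∈ Jp j).card
        = (Finset.univ.filter fun j : Fin nm => k ∈ Jm j).card) :
    ∑ i ∈ Finset.Icc 1 (tMax Jp),
        (condMI p (VJ V (compactForm Jp i)) Y (fun ω => (VJ V (compactForm Jp i)ᶜ ω, Q ω))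
          - condMI p (VJ V (compactForm Jp i)) Z Q)
      ≤ ∑ i : Fin np, condMI p (VJ V (Jp i)) Y (fun ω => (VJ V (Jp i)ᶜ ω, Q ω))
          - ∑ i : Fin nm, condMI p (VJ V (Jm i)) Z Q := by
  let bp : Finset (Fin K) → ℝ := fun T => condMI p (VJ V T) Y (fun ω => (VJ V Tᶜ ω, Q ω))
  let bm : Finset (Fin K) → ℝ := fun T => condMI p (VJ V T) Z Q
  have hbp_empty : bp ∅ = 0 := by
    simp only [bp]
    rw [condMI_VJ_compl, Finset.compl_empty]
    ring
  have hbp_sub : ∀ S T, bp (S ∪ T) + bp (S ∩ T) ≤ bp S + bp T := by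
    intro S T
    simp only [bp]
    rw [condMI_VJ_compl, condMI_VJ_compl, condMI_VJ_compl, condMI_VJ_compl, Finset.compl_union,
      Finset.compl_inter]
    linarith [ent_VJ_submodular hp V (fun ω => (Y ω, Q ω)) Sᶜ Tᶜ, hind.ent_VJ_modular hp Sᶜ Tᶜ]
  have hbm_empty : -bm ∅ = 0 := by
    simp only [bm, condMI_VJ, ent_VJ_empty]
    ring
  have hbm_sub : ∀ S T, -bm (S ∪ T) + -bm (S ∩ T) ≤ -bm S + -bm T := by
    intro S T
    simp only [bm, condMI_VJ]
    linarith [ent_VJ_submodular hp V (fun ω => (Z ω, Q ω)) S T, hind.ent_VJ_modular hp S T]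
  suffices h : ∑ i ∈ Finset.Icc 1 (tMax Jp), (bp (compactForm Jp i) - bm (compactForm Jp i))
      ≤ ∑ i, bp (Jp i) - ∑ i, bm (Jm i) from h
  have hcard : ∀ k, (Finset.univ.filter fun j => k ∈ Jp j).card ≤ tMax Jp := fun k =>
    Finset.le_sup (f := fun k : Fin K => (Finset.univ.filter fun j => k ∈ Jp j).card)
      (Finset.mem_univ k)
  have hplus := sum_superlevel_le_of_submodular hbp_empty hbp_sub Jp (tMax Jp) Finset.univ hcard
  have hminus := sum_superlevel_le_of_submodular (g := fun T => -bm T) hbm_empty hbm_sub Jm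
    (tMax Jp) Finset.univ fun k => hpres k ▸ hcard k
  simp only [← hpres, Finset.sum_neg_distrib] at hminus
  simp only [compactForm_eq_filter, Finset.sum_sub_distrib]
  linarith
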